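/- arXiv:1605.07873 — 4 statements merged into one kernel-verified Lean document; each statement's English description precedes it below -/
import Mathlib

section
/- Let (qₙ) satisfy Hypothesis (H) with parameters (γ,ν). For n ≥ 2 define p(n,k) = Σ_{λ∈𝒫ₙ} qₙ(λ)·m_k(λ)·(k/n) for 1 ≤ k ≤ n, and p(n,0) = 0. Let μ be the measure on [0,1] determined by ∫_{[0,1]} g dμ = ∫_{𝒮↓} Σ_{i≥1} s_i(1−s_i) g(s_i) ν(ds) for bounded measurable g : [0,1] → ℝ. Then μ is a nonzero finite measure on [0,1], p(n,·) is a probability measure on {0,1,…,n} for each n ≥ 2, and for every continuous g : [0,1] → ℝ, n^γ Σ_{k=0}^{n} p(n,k)(1−k/n) g(k/n) → ∫_{[0,1]} g dμ as n → ∞; that is, (p(n,·)) satisfies Hypothesis (H') with parameters (γ,μ). -/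
open MeasureTheory Filter Real Set

/-- The space `𝒮↓` of nonincreasing nonnegative sequences summing to `1`.
(On this set, the topology of the uniform distance `d(s,s') = supᵢ|sᵢ−s'ᵢ|` coincides with
the product (pointwise) topology inherited from `ℕ → ℝ`, since `sᵢ ≤ 1/(i+1)` uniformly.) -/
def Sdown : Set (ℕ → ℝ) :=
  {s | (∀ i, 0 ≤ s i) ∧ (∀ i j, i ≤ j → s j ≤ s i) ∧ HasSum s 1}

/-- The sequence `(1,0,0,…)`. -/
def oneSeq : ℕ → ℝ := fun i => if i = 0 then 1 else 0

lemma oneSeq_mem_Sdown : oneSeq ∈ Sdown := by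
  refine ⟨fun i => ?_, fun i j hij => ?_, ?_⟩
  · unfold oneSeq; split <;> norm_num
  · unfold oneSeq
    rcases Nat.eq_zero_or_pos j with hj | hj
    · have hi : i = 0 := by omega
      simp [hi, hj]
    · have hj' : j ≠ 0 := by omega
      simp only [hj', if_false]
      split <;> norm_num
  · exact hasSum_ite_eq 0 1

-- Interpret a sequence as an element of `𝒮↓` (junk value `(1,0,0,…)` if it is not in `𝒮↓`).
open Classical in
noncomputable def toSdown (s : ℕ → ℝ) : ↥Sdown :=
  if h : s ∈ Sdown then ⟨s, h⟩ else ⟨oneSeq, oneSeq_mem_Sdown⟩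

/-- `partVec n λ` is the element `λ/n = (λ₁/n, …, λ_p/n, 0, 0, …)` of `𝒮↓`: the parts of the
partition `λ` of `n`, in decreasing order, padded with zeros and divided by `n`. -/
noncomputable def partVec (n : ℕ) (lam : Nat.Partition n) : ℕ → ℝ :=
  fun i => (((lam.parts.sort (· ≤ ·)).reverse.getD i 0 : ℕ) : ℝ) / n

/-- Hypothesis (H) of Haas–Miermont for a sequence of splitting probabilities `(qₙ)`, with
parameters `γ > 0` and `ν` a nonzero σ-finite measure on `𝒮↓` with `∫(1−s₁)ν(ds) < ∞` and
`ν({(1,0,…)}) = 0`: for every bounded continuous `f : 𝒮↓ → ℝ`,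
`n^γ Σ_{λ∈𝒫ₙ} qₙ(λ)(1−λ₁/n) f(λ/n) → ∫_{𝒮↓} (1−s₁) f(s) ν(ds)`. -/
def HypH (q : ∀ n, Nat.Partition n → ℝ) (γ : ℝ) (ν : Measure ↥Sdown) : Prop :=
  ∀ f : ↥Sdown → ℝ, Continuous f → (∃ C, ∀ s, |f s| ≤ C) →
    Tendsto (fun n : ℕ => (n : ℝ) ^ γ * ∑ lam : Nat.Partition n,
        q n lam * (1 - partVec n lam 0) * f (toSdown (partVec n lam)))
      atTop (nhds (∫ s, (1 - s.1 0) * f s ∂ν))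

/-! A part of `λ` picked with probability proportional to its size has size `k` with probability
`p(n,k)`, so `∑ₖ p(n,k)(1-k/n)g(k/n) = ∑_λ qₙ(λ)Φ(λ/n)` with `Φ(s) = ∑ᵢ sᵢ(1-sᵢ)g(sᵢ)`, and the
convergence is Hypothesis (H) as soon as `Φ(s) = (1-s₁)f(s)` for a bounded continuous `f`. The
quotient `Φ(s)/(1-s₁)` is `0/0` at `(1,0,0,…)`, but with `r(x) = (1-x)g(x) - g(0)` it equals
`s₁g(s₁) + g(0) + ∑_{i≥2} sᵢ/(1-s₁)·r(sᵢ)` elsewhere, and this expression is continuous everywhere: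
the weights `sᵢ/(1-s₁)` have total mass at most `1` and `r(0) = 0`, so each term tends to `0` at
`(1,0,0,…)`, and since `sᵢ ≤ 1/i` the series converges uniformly. -/

namespace Sdown

section

variable (s : ↥Sdown)

lemma nonneg (i : ℕ) : 0 ≤ s.1 i := s.2.1 i

lemma hasSum : HasSum s.1 1 := s.2.2.2

lemma le_one (i : ℕ) : s.1 i ≤ 1 :=
  le_hasSum (hasSum s) i fun j _ => nonneg s j

lemma mem_Icc (i : ℕ) : s.1 i ∈ Icc (0 : ℝ) 1 := ⟨nonneg s i, le_one s i⟩

lemma le_one_div (i : ℕ) : s.1 i ≤ 1 / ((i : ℝ) + 1) := by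
  have hsum : ∑ j ∈ Finset.range (i + 1), s.1 j ≤ 1 :=
    sum_le_hasSum _ (fun j _ => nonneg s j) (hasSum s)
  have hcard : (Finset.range (i + 1)).card • s.1 i ≤ ∑ j ∈ Finset.range (i + 1), s.1 j :=
    Finset.card_nsmul_le_sum _ _ _ fun j hj => s.2.2.1 j i (Finset.mem_range_succ_iff.1 hj)
  rw [Finset.card_range, nsmul_eq_mul, Nat.cast_succ] at hcard
  rw [le_div_iff₀' (by positivity)]
  exact hcard.trans hsum

lemma hasSum_succ : HasSum (fun i => s.1 (i + 1)) (1 - s.1 0) := by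
  simpa only [Finset.sum_range_one] using (hasSum_nat_add_iff' (f := s.1) 1).2 (hasSum s)

lemma succ_le (i : ℕ) : s.1 (i + 1) ≤ 1 - s.1 0 :=
  le_hasSum (hasSum_succ s) i fun j _ => nonneg s (j + 1)

lemma apply_zero_pos : 0 < s.1 0 := by
  refine (nonneg s 0).lt_of_ne fun h0 => zero_ne_one (α := ℝ) ?_
  have hs : s.1 = 0 := funext fun i =>
    le_antisymm ((s.2.2.1 0 i i.zero_le).trans_eq h0.symm) (nonneg s i)
  exact hasSum_zero.unique (hs ▸ hasSum s)

variable {s} in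
lemma eq_oneSeq_of_apply_zero_eq_one (h : s.1 0 = 1) : s = ⟨oneSeq, oneSeq_mem_Sdown⟩ := by
  refine Subtype.ext (funext fun i => ?_)
  cases i with
  | zero => exact h
  | succ i => exact le_antisymm ((succ_le s i).trans_eq (by simp [oneSeq, h])) (nonneg s _)

end

lemma continuous_eval (i : ℕ) : Continuous fun s : ↥Sdown => s.1 i :=
  (continuous_apply i).comp continuous_subtype_val

lemma continuous_comp_eval {g : ℝ → ℝ} (hg : ContinuousOn g (Icc 0 1)) (i : ℕ) :
    Continuous fun s : ↥Sdown => g (s.1 i) :=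
  hg.comp_continuous (continuous_eval i) fun s => mem_Icc s i

/-- The relative masses `sᵢ / (1 - s₁)`, `i ≥ 2`, of the terms of `s` other than the first one
(indexed from `0`). They are all `0` at `(1,0,0,…)` and sum to `1` elsewhere. -/
noncomputable def tailWeight (s : ↥Sdown) (i : ℕ) : ℝ := s.1 (i + 1) / (1 - s.1 0)

section

variable (s : ↥Sdown)

lemma mul_tailWeight (i : ℕ) : (1 - s.1 0) * tailWeight s i = s.1 (i + 1) :=
  mul_div_cancel_of_imp' fun h => le_antisymm (h ▸ succ_le s i) (nonneg s _)

lemma tailWeight_nonneg (i : ℕ) : 0 ≤ tailWeight s i :=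
  div_nonneg (nonneg s _) (sub_nonneg.2 (le_one s 0))

lemma tailWeight_le_one (i : ℕ) : tailWeight s i ≤ 1 :=
  div_le_one_of_le₀ (succ_le s i) (sub_nonneg.2 (le_one s 0))

lemma summable_tailWeight : Summable (tailWeight s) :=
  (hasSum_succ s).summable.div_const _

lemma tsum_tailWeight_le_one : ∑' i, tailWeight s i ≤ 1 :=
  (((hasSum_succ s).div_const _).tsum_eq).trans_le (div_self_le_one _)

variable {b : ℕ → ℝ} {C : ℝ}

lemma norm_tailWeight_mul_le (hb : ∀ i, |b i| ≤ C) (N i : ℕ) :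
    ‖tailWeight s (i + N) * b i‖ ≤ tailWeight s (i + N) * C := by
  rw [norm_mul, Real.norm_of_nonneg (tailWeight_nonneg s _)]
  exact mul_le_mul_of_nonneg_left (hb i) (tailWeight_nonneg s _)

lemma summable_tailWeight_mul (hb : ∀ i, |b i| ≤ C) :
    Summable fun i => tailWeight s i * b i :=
  .of_norm_bounded ((summable_tailWeight s).mul_right C) (norm_tailWeight_mul_le s hb 0)

lemma abs_tsum_tailWeight_mul_le (hb : ∀ i, |b i| ≤ C) (N : ℕ) :
    |∑' i, tailWeight s (i + N) * b i| ≤ C := by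
  have hsummable : Summable fun i => tailWeight s (i + N) :=
    (summable_nat_add_iff N).2 (summable_tailWeight s)
  have hle : ∑' i, tailWeight s (i + N) ≤ 1 :=
    (hsummable.tsum_le_tsum_of_inj (· + N) (add_left_injective N)
      (fun i _ => tailWeight_nonneg s i) (fun _ => le_rfl) (summable_tailWeight s)).trans
      (tsum_tailWeight_le_one s)
  calc |∑' i, tailWeight s (i + N) * b i|
      ≤ (∑' i, tailWeight s (i + N)) * C :=
        tsum_of_norm_bounded (hsummable.hasSum.mul_right C) (norm_tailWeight_mul_le s hb N)
    _ ≤ C := mul_le_of_le_one_left ((abs_nonneg _).trans (hb 0)) hle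

end

/-- The average of `r` over the terms of `s` other than the first one, weighted by their
relative masses. -/
noncomputable def tailMean (r : ℝ → ℝ) (s : ↥Sdown) : ℝ :=
  ∑' i, tailWeight s i * r (s.1 (i + 1))

section

variable {r : ℝ → ℝ}

lemma continuous_tailWeight_mul (hr : ContinuousOn r (Icc 0 1)) (hr0 : r 0 = 0) (i : ℕ) :
    Continuous fun s : ↥Sdown => tailWeight s i * r (s.1 (i + 1)) := by
  have hrcont := continuous_comp_eval hr (i + 1)
  refine continuous_iff_continuousAt.2 fun s => ?_
  by_cases hs : 1 - s.1 0 = 0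
  · have hzero : r (s.1 (i + 1)) = 0 := by
      rw [← mul_tailWeight, hs, zero_mul, hr0]
    have hlim : Tendsto (fun t : ↥Sdown => |r (t.1 (i + 1))|) (nhds s) (nhds 0) := by
      simpa only [hzero, abs_zero] using (hrcont.tendsto s).abs
    rw [ContinuousAt, hzero, mul_zero]
    refine squeeze_zero_norm (fun t => ?_) hlim
    rw [norm_mul, Real.norm_of_nonneg (tailWeight_nonneg t i)]
    exact mul_le_of_le_one_left (norm_nonneg _) (tailWeight_le_one t i)
  · exact ((continuous_eval (i + 1)).continuousAt.div
      (continuous_const.sub (continuous_eval 0)).continuousAt hs).mul hrcont.continuousAt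

lemma eventually_forall_abs_comp_le (hr : ContinuousOn r (Icc 0 1)) (hr0 : r 0 = 0) {ε : ℝ}
    (hε : 0 < ε) : ∀ᶠ N in atTop, ∀ (s : ↥Sdown) (i : ℕ), N ≤ i → |r (s.1 i)| ≤ ε := by
  obtain ⟨δ, hδ, hr_near⟩ :=
    Metric.continuousWithinAt_iff.1 (hr 0 (left_mem_Icc.2 zero_le_one)) ε hε
  obtain ⟨N₀, hN₀⟩ := exists_nat_one_div_lt hδ
  filter_upwards [eventually_ge_atTop N₀] with N hN s i hi
  have hsmall : dist (s.1 i) 0 < δ := by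
    rw [dist_zero_right, Real.norm_of_nonneg (nonneg s i)]
    calc s.1 i ≤ 1 / ((i : ℝ) + 1) := le_one_div s i
      _ ≤ 1 / ((N₀ : ℝ) + 1) := Nat.one_div_le_one_div (hN.trans hi)
      _ < δ := hN₀
  simpa only [hr0, dist_zero_right, Real.norm_eq_abs] using (hr_near (mem_Icc s i) hsmall).le

lemma tendstoUniformly_tailMean (hr : ContinuousOn r (Icc 0 1)) (hr0 : r 0 = 0) :
    TendstoUniformly
      (fun N s => ∑ i ∈ Finset.range N, tailWeight s i * r (s.1 (i + 1))) (tailMean r) atTop := by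
  obtain ⟨C, hC⟩ := isCompact_Icc.exists_bound_of_continuousOn hr
  refine Metric.tendstoUniformly_iff.2 fun ε hε => ?_
  filter_upwards [eventually_forall_abs_comp_le hr hr0 (half_pos hε)] with N hN s
  have hsplit :=
    (summable_tailWeight_mul s fun i => hC _ (mem_Icc s (i + 1))).sum_add_tsum_nat_add N
  rw [tailMean, Real.dist_eq, ← hsplit, add_sub_cancel_left]
  exact (abs_tsum_tailWeight_mul_le s (fun i => hN s _ (by omega)) N).trans_lt (half_lt_self hε)

lemma continuous_tailMean (hr : ContinuousOn r (Icc 0 1)) (hr0 : r 0 = 0) :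
    Continuous (tailMean r) :=
  (tendstoUniformly_tailMean hr hr0).continuous <| .of_forall fun _ =>
    continuous_finsetSum _ fun i _ => continuous_tailWeight_mul hr hr0 i

lemma exists_abs_tailMean_le (hr : ContinuousOn r (Icc 0 1)) :
    ∃ C, ∀ s, |tailMean r s| ≤ C := by
  obtain ⟨C, hC⟩ := isCompact_Icc.exists_bound_of_continuousOn hr
  exact ⟨C, fun s => abs_tsum_tailWeight_mul_le s (fun i => hC _ (mem_Icc s (i + 1))) 0⟩

end

/-- The functional `∑ᵢ sᵢ(1 - sᵢ)g(sᵢ)`, whose `ν`-integral is the `μ`-integral of `g`. -/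
noncomputable def biasedSum (g : ℝ → ℝ) (s : ↥Sdown) : ℝ :=
  ∑' i, s.1 i * (1 - s.1 i) * g (s.1 i)

/-- The density of `biasedSum g` with respect to `1 - s₁`, written so as to be continuous at
`(1,0,0,…)`, where the quotient `biasedSum g s / (1 - s₁)` would be `0 / 0`. -/
noncomputable def biasedDensity (g : ℝ → ℝ) (s : ↥Sdown) : ℝ :=
  s.1 0 * g (s.1 0) + g 0 + tailMean (fun x => (1 - x) * g x - g 0) s

section

variable {g : ℝ → ℝ}

lemma continuousOn_biasedDensity_remainder (hg : ContinuousOn g (Icc 0 1)) :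
    ContinuousOn (fun x => (1 - x) * g x - g 0) (Icc 0 1) := by
  fun_prop

lemma continuous_biasedDensity (hg : ContinuousOn g (Icc 0 1)) :
    Continuous (biasedDensity g) :=
  (((continuous_eval 0).mul (continuous_comp_eval hg 0)).add continuous_const).add
    (continuous_tailMean (continuousOn_biasedDensity_remainder hg) (by simp))

lemma exists_abs_biasedDensity_le (hg : ContinuousOn g (Icc 0 1)) :
    ∃ C, ∀ s, |biasedDensity g s| ≤ C := by
  obtain ⟨B, hB⟩ := isCompact_Icc.exists_bound_of_continuousOn hg
  obtain ⟨D, hD⟩ := exists_abs_tailMean_le (continuousOn_biasedDensity_remainder hg)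
  refine ⟨B + B + D, fun s => ?_⟩
  have hfirst : |s.1 0 * g (s.1 0)| ≤ B := by
    rw [abs_mul, abs_of_nonneg (nonneg s 0)]
    exact (mul_le_of_le_one_left (abs_nonneg _) (le_one s 0)).trans (hB _ (mem_Icc s 0))
  exact (abs_add_three _ _ _).trans
    (add_le_add (add_le_add hfirst (hB 0 (left_mem_Icc.2 zero_le_one))) (hD s))

lemma mul_biasedDensity (hg : ContinuousOn g (Icc 0 1)) (s : ↥Sdown) :
    (1 - s.1 0) * biasedDensity g s = biasedSum g s := by
  obtain ⟨C, hC⟩ := isCompact_Icc.exists_bound_of_continuousOn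
    (continuousOn_biasedDensity_remainder hg)
  have hremainder := (summable_tailWeight_mul s fun i =>
    hC _ (mem_Icc s (i + 1))).hasSum.mul_left (1 - s.1 0)
  have hlinear := (hasSum_succ s).mul_right (g 0)
  have htail : HasSum (fun i => s.1 (i + 1) * (1 - s.1 (i + 1)) * g (s.1 (i + 1)))
      ((1 - s.1 0) * tailMean (fun x => (1 - x) * g x - g 0) s + (1 - s.1 0) * g 0) := by
    refine (hremainder.add hlinear).congr_fun fun i => ?_
    rw [← mul_assoc, mul_tailWeight]
    ring
  have htotal := HasSum.zero_add (f := fun i => s.1 i * (1 - s.1 i) * g (s.1 i)) htail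
  rw [biasedSum, htotal.tsum_eq, biasedDensity]
  ring

lemma integrable_biasedSum {ν : Measure ↥Sdown} (hν : Integrable (fun s => 1 - s.1 0) ν)
    (hg : ContinuousOn g (Icc 0 1)) : Integrable (biasedSum g) ν := by
  obtain ⟨C, hC⟩ := exists_abs_biasedDensity_le hg
  simp only [funext fun s => (mul_biasedDensity hg s).symm]
  exact hν.mul_bdd (continuous_biasedDensity hg).aestronglyMeasurable (ae_of_all _ hC)

end

lemma biasedSum_indicator_Icc (g : ℝ → ℝ) : biasedSum ((Icc 0 1).indicator g) = biasedSum g :=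
  funext fun s => tsum_congr fun i => by rw [indicator_of_mem (mem_Icc s i)]

section

variable (s : ↥Sdown)

lemma mul_one_sub_nonneg (i : ℕ) : 0 ≤ s.1 i * (1 - s.1 i) :=
  mul_nonneg (nonneg s i) (sub_nonneg.2 (le_one s i))

lemma biasedSum_one_nonneg : 0 ≤ biasedSum 1 s :=
  tsum_nonneg fun i => by simpa only [Pi.one_apply, mul_one] using mul_one_sub_nonneg s i

variable {s} in
lemma biasedSum_one_pos (hs : s ≠ ⟨oneSeq, oneSeq_mem_Sdown⟩) : 0 < biasedSum 1 s := by
  have hlt : s.1 0 < 1 := (le_one s 0).lt_of_ne (mt eq_oneSeq_of_apply_zero_eq_one hs)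
  have hsummable : Summable fun i => s.1 i * (1 - s.1 i) :=
    .of_nonneg_of_le (mul_one_sub_nonneg s)
      (fun i => mul_le_of_le_one_right (nonneg s i) (sub_le_self 1 (nonneg s i)))
      (hasSum s).summable
  simp only [biasedSum, Pi.one_apply, mul_one]
  exact hsummable.tsum_pos (mul_one_sub_nonneg s) 0
    (mul_pos (apply_zero_pos s) (sub_pos.2 hlt))

end

lemma integral_biasedSum_one_pos {ν : Measure ↥Sdown} (hν0 : ν ≠ 0)
    (hνint : Integrable (fun s => 1 - s.1 0) ν)
    (hνone : ν {⟨oneSeq, oneSeq_mem_Sdown⟩} = 0) : 0 < ∫ s, biasedSum 1 s ∂ν := by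
  rw [integral_pos_iff_support_of_nonneg biasedSum_one_nonneg
    (integrable_biasedSum hνint continuousOn_const)]
  have hcompl : 0 < ν {⟨oneSeq, oneSeq_mem_Sdown⟩}ᶜ := by
    rw [measure_compl (measurableSet_singleton _) (by simp [hνone]), hνone, tsub_zero]
    exact Measure.measure_univ_pos.2 hν0
  exact hcompl.trans_le (measure_mono fun s hs => (biasedSum_one_pos hs).ne')

end Sdown

/-- `μ` is the image of `ν` under the size-biased choice of a term, weighted by its distance
to `1`: `∫ g dμ = ∫ ∑ᵢ sᵢ(1 - sᵢ)g(sᵢ) ν(ds)` for bounded measurable `g`. -/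
def IsBiasedImage (μ : Measure ℝ) (ν : Measure ↥Sdown) : Prop :=
  ∀ g : ℝ → ℝ, Measurable g → (∃ C, ∀ x, |g x| ≤ C) →
    ∫ x, g x ∂μ = ∫ s, Sdown.biasedSum g s ∂ν

namespace IsBiasedImage

variable {μ : Measure ℝ} {ν : Measure ↥Sdown}

lemma ne_zero_and_isFiniteMeasure (h : IsBiasedImage μ ν) (hν0 : ν ≠ 0)
    (hνint : Integrable (fun s => 1 - s.1 0) ν)
    (hνone : ν {⟨oneSeq, oneSeq_mem_Sdown⟩} = 0) : μ ≠ 0 ∧ IsFiniteMeasure μ := by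
  have hmass : μ.real univ = ∫ s, Sdown.biasedSum 1 s ∂ν := by
    rw [← h 1 measurable_one ⟨1, fun _ => by simp⟩]
    simp
  have hpos : 0 < μ.real univ := hmass ▸ Sdown.integral_biasedSum_one_pos hν0 hνint hνone
  obtain ⟨hμ0, hμtop⟩ := ENNReal.toReal_pos_iff.1 hpos
  exact ⟨Measure.measure_univ_pos.1 hμ0, ⟨hμtop⟩⟩

lemma setIntegral_Icc (h : IsBiasedImage μ ν) {g : ℝ → ℝ} (hg : ContinuousOn g (Icc 0 1)) :
    ∫ x in Icc (0 : ℝ) 1, g x ∂μ = ∫ s, Sdown.biasedSum g s ∂ν := by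
  classical
  obtain ⟨C, hC⟩ := isCompact_Icc.exists_bound_of_continuousOn hg
  have hmeas : Measurable ((Icc 0 1).indicator g) := by
    rw [← piecewise_eq_indicator]
    exact hg.measurable_piecewise continuousOn_const measurableSet_Icc
  have hbdd : ∀ x, |(Icc 0 1).indicator g x| ≤ C := fun x => by
    by_cases hx : x ∈ Icc (0 : ℝ) 1
    · simpa only [indicator_of_mem hx, Real.norm_eq_abs] using hC x hx
    · simpa only [indicator_of_notMem hx, abs_zero] using
        (abs_nonneg (g 0)).trans (hC 0 (left_mem_Icc.2 zero_le_one))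
  rw [← integral_indicator measurableSet_Icc, h _ hmeas ⟨C, hbdd⟩, Sdown.biasedSum_indicator_Icc]

end IsBiasedImage

lemma hasSum_comp_getD {α M : Type*} [AddCommMonoid M] [TopologicalSpace M] [ContinuousAdd M]
    {φ : α → M} {d : α} (hd : φ d = 0) (l : List α) :
    HasSum (fun i => φ (l.getD i d)) (l.map φ).sum := by
  induction l with
  | nil => simp [hd, hasSum_zero]
  | cons a l ih =>
    rw [List.map_cons, List.sum_cons]
    exact HasSum.zero_add (f := fun i => φ ((a :: l).getD i d)) ih

lemma antitone_getD_of_sortedGE {α : Type*} [Preorder α] {l : List α} {d : α} (hl : l.SortedGE)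
    (hd : ∀ a ∈ l, d ≤ a) : Antitone fun i => l.getD i d := by
  intro i j hij
  by_cases hj : j < l.length
  · simpa only [List.getD_eq_getElem _ _ hj, List.getD_eq_getElem _ _ (hij.trans_lt hj)] using
      hl.getElem_ge_getElem_of_le hij
  · simp only [List.getD_eq_default _ _ (not_lt.1 hj)]
    by_cases hi : i < l.length
    · exact (hd _ (List.getElem_mem hi)).trans_eq (List.getD_eq_getElem _ _ hi).symm
    · exact (List.getD_eq_default _ _ (not_lt.1 hi)).ge

lemma sum_range_count_mul {R : Type*} [Semiring R] {m : Multiset ℕ} {N : ℕ} (hm : ∀ k ∈ m, k < N)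
    (φ : ℕ → R) : ∑ k ∈ Finset.range N, (m.count k : R) * φ k = (m.map φ).sum := by
  simp only [Finset.sum_multiset_map_count, nsmul_eq_mul]
  refine (Finset.sum_subset (fun k hk => ?_) fun k _ hk => ?_).symm
  · exact Finset.mem_range.2 (hm k (Multiset.mem_toFinset.1 hk))
  · rw [Multiset.count_eq_zero_of_notMem (mt Multiset.mem_toFinset.2 hk), Nat.cast_zero, zero_mul]

section partVec

variable {n : ℕ} (lam : Nat.Partition n)

lemma hasSum_comp_partVec {φ : ℝ → ℝ} (hφ : φ 0 = 0) :
    HasSum (fun i => φ (partVec n lam i)) (lam.parts.map fun k : ℕ => φ ((k : ℝ) / n)).sum := by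
  have hparts : (lam.parts.map fun k : ℕ => φ ((k : ℝ) / n)).sum =
      ((lam.parts.sort (· ≤ ·)).reverse.map fun k : ℕ => φ ((k : ℝ) / n)).sum := by
    conv_lhs => rw [← Multiset.sort_eq lam.parts (· ≤ ·)]
    rw [Multiset.map_coe, Multiset.sum_coe, List.map_reverse, List.sum_reverse]
  rw [hparts]
  exact hasSum_comp_getD (φ := fun k : ℕ => φ ((k : ℝ) / n)) (by simp [hφ]) _

lemma antitone_partVec : Antitone (partVec n lam) := fun i j hij => by
  have hsorted : (lam.parts.sort (· ≤ ·)).reverse.SortedGE :=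
    List.sortedGE_reverse.2 (Multiset.pairwise_sort _ _).sortedLE
  exact div_le_div_of_nonneg_right
    (Nat.cast_le.2 (antitone_getD_of_sortedGE hsorted (fun _ _ => zero_le) hij)) n.cast_nonneg

lemma partVec_mem_Sdown (hn : n ≠ 0) : partVec n lam ∈ Sdown := by
  refine ⟨fun i => div_nonneg (Nat.cast_nonneg _) n.cast_nonneg,
    fun i j hij => antitone_partVec lam hij, ?_⟩
  have hsum : (lam.parts.map fun k : ℕ => (k : ℝ) / n).sum = 1 := by
    rw [Multiset.sum_map_div, ← Nat.cast_multiset_sum, lam.parts_sum,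
      div_self (Nat.cast_ne_zero.2 hn)]
  exact hsum ▸ hasSum_comp_partVec lam (φ := id) rfl

lemma toSdown_partVec (hn : n ≠ 0) : (toSdown (partVec n lam)).1 = partVec n lam := by
  rw [toSdown, dif_pos (partVec_mem_Sdown lam hn)]

end partVec

/-- The law `p(n,·)` of the size of the part containing a uniformly chosen element of
`{1,…,n}`, when the partition of `n` is drawn with probabilities `q`. -/
noncomputable def sizeBiasedLaw {n : ℕ} (q : Nat.Partition n → ℝ) (k : ℕ) : ℝ :=
  ∑ lam, q lam * (lam.parts.count k : ℝ) * ((k : ℝ) / n)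

section sizeBiasedLaw

variable {n : ℕ} {q : Nat.Partition n → ℝ}

lemma sizeBiasedLaw_zero : sizeBiasedLaw q 0 = 0 := by
  simp [sizeBiasedLaw]

lemma sizeBiasedLaw_nonneg (hq : ∀ lam, 0 ≤ q lam) (k : ℕ) : 0 ≤ sizeBiasedLaw q k :=
  Finset.sum_nonneg fun lam _ =>
    mul_nonneg (mul_nonneg (hq lam) (Nat.cast_nonneg _)) (by positivity)

variable (q) in
lemma sum_sizeBiasedLaw_mul (g : ℝ → ℝ) :
    ∑ k ∈ Finset.range (n + 1), sizeBiasedLaw q k * g ((k : ℝ) / n) =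
      ∑ lam, q lam * ∑' i, partVec n lam i * g (partVec n lam i) := by
  have htsum (lam : Nat.Partition n) : ∑' i, partVec n lam i * g (partVec n lam i) =
      ∑ k ∈ Finset.range (n + 1), (lam.parts.count k : ℝ) * ((k : ℝ) / n * g ((k : ℝ) / n)) := by
    rw [(hasSum_comp_partVec lam (φ := fun x => x * g x) (zero_mul _)).tsum_eq]
    exact (sum_range_count_mul
      (fun k hk => Nat.lt_succ_of_le (lam.le_of_mem_parts hk)) _).symm
  simp only [htsum, sizeBiasedLaw, Finset.sum_mul, Finset.mul_sum]
  rw [Finset.sum_comm]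
  exact Finset.sum_congr rfl fun lam _ => Finset.sum_congr rfl fun k _ => by ring

variable (q) in
lemma sum_sizeBiasedLaw (hn : n ≠ 0) :
    ∑ k ∈ Finset.range (n + 1), sizeBiasedLaw q k = ∑ lam, q lam := by
  have h := sum_sizeBiasedLaw_mul q 1
  simp only [Pi.one_apply, mul_one] at h
  simp only [h, (partVec_mem_Sdown _ hn).2.2.tsum_eq, mul_one]

variable (q) in
lemma sum_sizeBiasedLaw_mul_one_sub (hn : n ≠ 0) {g : ℝ → ℝ} (hg : ContinuousOn g (Icc 0 1)) :
    ∑ k ∈ Finset.range (n + 1), sizeBiasedLaw q k * (1 - (k : ℝ) / n) * g ((k : ℝ) / n) =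
      ∑ lam, q lam * (1 - partVec n lam 0) * Sdown.biasedDensity g (toSdown (partVec n lam)) := by
  have hpart (lam : Nat.Partition n) :
      (1 - partVec n lam 0) * Sdown.biasedDensity g (toSdown (partVec n lam)) =
        ∑' i, partVec n lam i * ((1 - partVec n lam i) * g (partVec n lam i)) := by
    have h := Sdown.mul_biasedDensity hg (toSdown (partVec n lam))
    simpa only [Sdown.biasedSum, toSdown_partVec lam hn, mul_assoc] using h
  simp only [mul_assoc, hpart]
  exact sum_sizeBiasedLaw_mul q fun x => (1 - x) * g x

end sizeBiasedLaw

lemma HypH.tendsto_sizeBiasedLaw {q : ∀ n, Nat.Partition n → ℝ} {γ : ℝ} {ν : Measure ↥Sdown}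
    (h : HypH q γ ν) {g : ℝ → ℝ} (hg : ContinuousOn g (Icc 0 1)) :
    Tendsto (fun n : ℕ => (n : ℝ) ^ γ * ∑ k ∈ Finset.range (n + 1),
        sizeBiasedLaw (q n) k * (1 - (k : ℝ) / n) * g ((k : ℝ) / n))
      atTop (nhds (∫ s, Sdown.biasedSum g s ∂ν)) := by
  have hlim := h _ (Sdown.continuous_biasedDensity hg) (Sdown.exists_abs_biasedDensity_le hg)
  simp only [Sdown.mul_biasedDensity hg] at hlim
  refine hlim.congr' ?_
  filter_upwards [eventually_ne_atTop 0] with n hn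
  rw [sum_sizeBiasedLaw_mul_one_sub (q n) hn hg]

/-- let `(qₙ)` satisfy Hypothesis (H) with parameters `(γ,ν)`. Define
`p(n,k) = Σ_{λ∈𝒫ₙ} qₙ(λ)·m_k(λ)·(k/n)` for `1 ≤ k ≤ n` and `p(n,0) = 0` (`n ≥ 2`), and let
`μ` be the measure on `[0,1]` determined by
`∫ g dμ = ∫_{𝒮↓} Σᵢ sᵢ(1−sᵢ)g(sᵢ) ν(ds)` for bounded measurable `g`. Then `μ` is a nonzero
finite measure, `p(n,·)` is a probability measure on `{0,…,n}` for each `n ≥ 2`, and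
`(p(n,·))` satisfies Hypothesis (H') with parameters `(γ,μ)`: for every continuous
`g : [0,1] → ℝ`, `n^γ Σ_{k=0}^{n} p(n,k)(1−k/n) g(k/n) → ∫_{[0,1]} g dμ`. -/
theorem stmt2 (q : ∀ n, Nat.Partition n → ℝ) (γ : ℝ) (hγ : 0 < γ)
    (ν : Measure ↥Sdown) [SigmaFinite ν] (hν0 : ν ≠ 0)
    (hνint : Integrable (fun s : ↥Sdown => 1 - s.1 0) ν)
    (hνone : ν {⟨oneSeq, oneSeq_mem_Sdown⟩} = 0)
    (hq0 : ∀ n lam, 0 ≤ q n lam)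
    (hq1 : ∀ n, 1 ≤ n → ∑ lam : Nat.Partition n, q n lam = 1)
    (hqlt : ∀ n, 2 ≤ n → q n (Nat.Partition.indiscrete n) < 1)
    (hH : HypH q γ ν)
    (μ : Measure ℝ) (hsupp : μ (Set.Icc (0:ℝ) 1)ᶜ = 0)
    (hμ : ∀ g : ℝ → ℝ, Measurable g → (∃ C, ∀ x, |g x| ≤ C) →
      ∫ x, g x ∂μ = ∫ s, (∑' i, s.1 i * (1 - s.1 i) * g (s.1 i)) ∂ν)
    (p : ℕ → ℕ → ℝ)
    (hp : ∀ n, 2 ≤ n → p n 0 = 0 ∧ ∀ k, 1 ≤ k → k ≤ n →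
      p n k = ∑ lam : Nat.Partition n, q n lam * (lam.parts.count k : ℝ) * ((k : ℝ) / n)) :
    (μ ≠ 0 ∧ IsFiniteMeasure μ) ∧
    (∀ n, 2 ≤ n → (∀ k, k ≤ n → 0 ≤ p n k) ∧ ∑ k ∈ Finset.range (n + 1), p n k = 1) ∧
    (∀ g : ℝ → ℝ, ContinuousOn g (Set.Icc 0 1) →
      Tendsto (fun n : ℕ => (n : ℝ) ^ γ * ∑ k ∈ Finset.range (n + 1),
          p n k * (1 - (k : ℝ) / n) * g ((k : ℝ) / n))
        atTop (nhds (∫ x in Set.Icc (0:ℝ) 1, g x ∂μ))) := by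
  have hp_eq : ∀ n, 2 ≤ n → ∀ k, k ≤ n → p n k = sizeBiasedLaw (q n) k := by
    intro n hn k hk
    rcases k.eq_zero_or_pos with rfl | hk0
    · rw [(hp n hn).1, sizeBiasedLaw_zero]
    · exact (hp n hn).2 k hk0 hk
  have hμν : IsBiasedImage μ ν := hμ
  refine ⟨hμν.ne_zero_and_isFiniteMeasure hν0 hνint hνone, fun n hn => ⟨fun k hk => ?_, ?_⟩,
    fun g hg => ?_⟩
  · exact hp_eq n hn k hk ▸ sizeBiasedLaw_nonneg (hq0 n) k
  · rw [Finset.sum_congr rfl fun k hk => hp_eq n hn k (Finset.mem_range_succ_iff.1 hk),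
      sum_sizeBiasedLaw (q n) (by omega), hq1 n (by omega)]
  · rw [hμν.setIntegral_Icc hg]
    refine (hH.tendsto_sizeBiasedLaw hg).congr' ?_
    filter_upwards [eventually_ge_atTop 2] with n hn
    congr 1
    exact Finset.sum_congr rfl fun k hk => by
      rw [hp_eq n hn k (Finset.mem_range_succ_iff.1 hk)]
end

section
/- Let (p(n,·)) satisfy Hypothesis (H') with parameters (γ,μ). For λ > 0 set φ(λ) = μ({0}) + λ·μ({1}) + ∫_{(0,1)} (1−x^λ)/(1−x) μ(dx). Then for every λ > 0, n^γ·(1 − Σ_{k=0}^{n} p(n,k)·(k/n)^λ) → φ(λ) as n → ∞ (with the convention 0^λ = 0); equivalently, if X_n(1) has law p(n,·) and G_n(λ) := 𝔼[(X_n(1)/n)^λ], then 1 − G_n(λ) ~ n^{−γ}·φ(λ). -/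
open MeasureTheory Filter Real Set

/-- Hypothesis (H') for a family `p(n,·)` of probability measures on `{0,…,n}`, with
parameters `γ > 0` and a nonzero finite measure `μ` on `[0,1]` (a measure on `ℝ` supported
on `[0,1]`): for every continuous `f : [0,1] → ℝ`,
`n^γ Σ_{k=0}^{n} p(n,k)(1−k/n) f(k/n) → ∫_{[0,1]} f dμ`. -/
def HypHprime (p : ℕ → ℕ → ℝ) (γ : ℝ) (μ : Measure ℝ) : Prop :=
  ∀ f : ℝ → ℝ, ContinuousOn f (Set.Icc 0 1) →
    Tendsto (fun n : ℕ => (n : ℝ) ^ γ * ∑ k ∈ Finset.range (n + 1),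
        p n k * (1 - (k : ℝ) / n) * f ((k : ℝ) / n))
      atTop (nhds (∫ x in Set.Icc (0:ℝ) 1, f x ∂μ))

/-- The Laplace exponent `φ(λ) = μ({0}) + λ·μ({1}) + ∫_{(0,1)} (1−x^λ)/(1−x) μ(dx)`. -/
noncomputable def phi (μ : Measure ℝ) (l : ℝ) : ℝ :=
  (μ {0}).toReal + l * (μ {1}).toReal + ∫ x in Set.Ioo (0:ℝ) 1, (1 - x ^ l) / (1 - x) ∂μ

/-! Write `g x = x ^ l`. Since `g 1 = 1` and the weights `p n k` sum to one,
`1 - ∑ k, p n k * g (k / n)` equals `∑ k, p n k * (1 - k / n) * f (k / n)`, where `f` is the slope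
of `g` between its argument and `1`. As `g` is differentiable at `1`, `f` extends continuously to
`[0, 1]` with `f 1 = l`, so Hypothesis (H') applies to it, and splitting `∫ f dμ` at the endpoints
gives `phi μ l`. -/

theorem sub_sum_smul_eq_sum_smul_dslope {ι 𝕜 E : Type*} [NontriviallyNormedField 𝕜]
    [NormedAddCommGroup E] [NormedSpace 𝕜 E] {s : Finset ι} {w : ι → 𝕜} (hw : ∑ i ∈ s, w i = 1)
    (x : ι → 𝕜) (g : 𝕜 → E) (a : 𝕜) :
    g a - ∑ i ∈ s, w i • g (x i) = ∑ i ∈ s, (w i * (a - x i)) • dslope g a (x i) := by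
  have hslope (b : 𝕜) : (a - b) • dslope g a b = g a - g b := by
    rw [← neg_sub b a, neg_smul, sub_smul_dslope, neg_sub]
  calc
    g a - ∑ i ∈ s, w i • g (x i) = ∑ i ∈ s, w i • (g a - g (x i)) := by
      simp only [smul_sub, Finset.sum_sub_distrib, ← Finset.sum_smul, hw, one_smul]
    _ = ∑ i ∈ s, (w i * (a - x i)) • dslope g a (x i) := by
      simp only [mul_smul, hslope]

theorem continuousOn_dslope_of_differentiableAt {𝕜 E : Type*} [NontriviallyNormedField 𝕜]
    [NormedAddCommGroup E] [NormedSpace 𝕜 E] {g : 𝕜 → E} {s : Set 𝕜} {a : 𝕜}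
    (hg : ContinuousOn g s) (hd : DifferentiableAt 𝕜 g a) : ContinuousOn (dslope g a) s := by
  intro x hx
  rcases eq_or_ne x a with rfl | hxa
  · exact (continuousAt_dslope_same.2 hd).continuousWithinAt
  · exact (continuousWithinAt_dslope_of_ne hxa).2 (hg x hx)

theorem setIntegral_insert {α E : Type*} [MeasurableSpace α] [MeasurableSingletonClass α]
    [NormedAddCommGroup E] [NormedSpace ℝ E] [CompleteSpace E] {μ : Measure α} {f : α → E}
    {s : Set α} {a : α} (ha : a ∉ s) (hf : IntegrableOn f (insert a s) μ) :
    ∫ x in insert a s, f x ∂μ = μ.real {a} • f a + ∫ x in s, f x ∂μ := by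
  rw [← union_singleton] at hf ⊢
  rw [setIntegral_union (disjoint_singleton_right.2 ha) (measurableSet_singleton a)
    hf.left_of_union hf.right_of_union, integral_singleton, add_comm]

theorem setIntegral_Icc_eq_add_setIntegral_Ioo {α E : Type*} [PartialOrder α] [MeasurableSpace α]
    [MeasurableSingletonClass α] [NormedAddCommGroup E] [NormedSpace ℝ E] [CompleteSpace E]
    {μ : Measure α} {f : α → E} {a b : α} (hab : a < b) (hf : IntegrableOn f (Icc a b) μ) :
    ∫ x in Icc a b, f x ∂μ =
      μ.real {a} • f a + μ.real {b} • f b + ∫ x in Ioo a b, f x ∂μ := by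
  rw [← Ioc_insert_left hab.le] at hf ⊢
  rw [setIntegral_insert left_notMem_Ioc hf]
  have hf' : IntegrableOn f (Ioc a b) μ := hf.mono_set (subset_insert a _)
  rw [← Ioo_insert_right hab] at hf' ⊢
  rw [setIntegral_insert right_notMem_Ioo hf', add_assoc]

theorem HypHprime.tendsto_mul_sub_sum {p : ℕ → ℕ → ℝ} {γ : ℝ} {μ : Measure ℝ}
    (hH : HypHprime p γ μ) (hp : ∀ᶠ n in atTop, ∑ k ∈ Finset.range (n + 1), p n k = 1)
    {g : ℝ → ℝ} (hg : ContinuousOn g (Icc 0 1)) (hd : DifferentiableAt ℝ g 1) :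
    Tendsto (fun n : ℕ => (n : ℝ) ^ γ *
        (g 1 - ∑ k ∈ Finset.range (n + 1), p n k * g ((k : ℝ) / n)))
      atTop (nhds (∫ x in Icc (0 : ℝ) 1, dslope g 1 x ∂μ)) := by
  refine (hH _ (continuousOn_dslope_of_differentiableAt hg hd)).congr' ?_
  filter_upwards [hp] with n hn
  exact congrArg _
    (sub_sum_smul_eq_sum_smul_dslope hn (fun k : ℕ => (k : ℝ) / n) g 1).symm

theorem phi_eq_setIntegral_dslope (μ : Measure ℝ) [IsFiniteMeasureOnCompacts μ] {l : ℝ}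
    (hl : 0 < l) : phi μ l = ∫ x in Icc (0 : ℝ) 1, dslope (fun y => y ^ l) 1 x ∂μ := by
  have hderiv : HasDerivAt (fun y : ℝ => y ^ l) l 1 := by
    simpa using hasDerivAt_rpow_const (x := 1) (p := l) (Or.inl one_ne_zero)
  have hcont : ContinuousOn (dslope (fun y : ℝ => y ^ l) 1) (Icc 0 1) :=
    continuousOn_dslope_of_differentiableAt (continuous_rpow_const hl.le).continuousOn
      hderiv.differentiableAt
  have hslope {x : ℝ} (hx : x ≠ 1) :
      dslope (fun y : ℝ => y ^ l) 1 x = (1 - x ^ l) / (1 - x) := by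
    rw [dslope_of_ne _ hx, slope_comm, slope_def_field, one_rpow]
  have hzero : dslope (fun y : ℝ => y ^ l) 1 0 = 1 := by
    rw [hslope zero_ne_one, zero_rpow hl.ne', sub_zero, div_one]
  have hone : dslope (fun y : ℝ => y ^ l) 1 1 = l := by
    rw [dslope_same, hderiv.deriv]
  have hIoo : ∫ x in Ioo (0 : ℝ) 1, dslope (fun y => y ^ l) 1 x ∂μ =
      ∫ x in Ioo (0 : ℝ) 1, (1 - x ^ l) / (1 - x) ∂μ :=
    setIntegral_congr_fun measurableSet_Ioo fun _ hx => hslope hx.2.ne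
  rw [setIntegral_Icc_eq_add_setIntegral_Ioo zero_lt_one hcont.integrableOn_Icc, hzero, hone, hIoo,
    smul_eq_mul, smul_eq_mul, mul_one, mul_comm _ l, phi, measureReal_def, measureReal_def]

theorem stmt3_general {p : ℕ → ℕ → ℝ} {γ : ℝ} {μ : Measure ℝ} [IsFiniteMeasureOnCompacts μ]
    (hp : ∀ᶠ n in atTop, ∑ k ∈ Finset.range (n + 1), p n k = 1) (hH : HypHprime p γ μ)
    {l : ℝ} (hl : 0 < l) :
    Tendsto (fun n : ℕ => (n : ℝ) ^ γ *
        (1 - ∑ k ∈ Finset.range (n + 1), p n k * ((k : ℝ) / n) ^ l))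
      atTop (nhds (phi μ l)) := by
  rw [phi_eq_setIntegral_dslope μ hl]
  simpa only [one_rpow] using hH.tendsto_mul_sub_sum hp (continuous_rpow_const hl.le).continuousOn
    (differentiableAt_rpow_const_of_ne l one_ne_zero)

/-- under Hypothesis (H') with parameters `(γ,μ)`, for every `λ > 0`,
`n^γ·(1 − Σ_{k=0}^{n} p(n,k)·(k/n)^λ) → φ(λ)` (with `0^λ = 0`); that is, if `Xₙ(1)` has law
`p(n,·)` and `Gₙ(λ) = 𝔼[(Xₙ(1)/n)^λ]`, then `1 − Gₙ(λ) ~ n^{−γ}·φ(λ)`. -/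
theorem stmt3 (p : ℕ → ℕ → ℝ) (γ : ℝ) (hγ : 0 < γ)
    (μ : Measure ℝ) [IsFiniteMeasure μ] (hμ0 : μ ≠ 0) (hsupp : μ (Set.Icc (0:ℝ) 1)ᶜ = 0)
    (hp0 : ∀ n k : ℕ, k ≤ n → 0 ≤ p n k)
    (hp1 : ∀ n : ℕ, 1 ≤ n → ∑ k ∈ Finset.range (n + 1), p n k = 1)
    (hH : HypHprime p γ μ) :
    ∀ l : ℝ, 0 < l →
      Tendsto (fun n : ℕ => (n : ℝ) ^ γ *
          (1 - ∑ k ∈ Finset.range (n + 1), p n k * ((k : ℝ) / n) ^ l))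
        atTop (nhds (phi μ l)) := by
  exact fun l hl => stmt3_general (eventually_atTop.2 ⟨1, hp1⟩) hH hl
end

section
/- Let (ξ_i)_{i≥1} be i.i.d. random variables taking values in {−1,0,1,2,…}, let S_0 = 0 and S_m = ξ₁ + ⋯ + ξ_m, and let T = inf{m ≥ 1 : S_m = −1} be the first hitting time of −1 by the walk. Then for every n ≥ 1, ℙ(T = n) = (1/n)·ℙ(S_n = −1) (the Otter–Dwass formula, also called the cyclic lemma). -/
open MeasureTheory ProbabilityTheory Filter

/-!
Raney's cycle lemma: among the `n` cyclic shifts of an integer sequence `x₀, …, xₙ₋₁` with sum `-1`,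
exactly one has nonnegative partial sums before time `n`. Extend the sequence periodically, so that
its partial sums satisfy `Sₘ₊ₙ = Sₘ - 1`. Tilting the graph makes `m ↦ n * Sₘ + m` periodic of
period `n`, and this function is injective on a period because its value determines `m` modulo `n`.
The required shift is the one that starts at its unique minimiser.

A walk with increments at least `-1` cannot jump over `-1`, so it first hits `-1` at time `n`
exactly when `Sₙ = -1` and the earlier partial sums are nonnegative. If the law of `(ξ₁, …, ξₙ)` is
invariant under cyclic shifts, the events that the `k`-th shift first hits `-1` at time `n`, for
`k < n`, have the same probability, and they partition `{Sₙ = -1}`.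
-/

section CycleLemma

-- The tilt contributes `m < n`, too little to make up for the loss of `n` when `s` drops by one.
theorem le_add_iff_tilted_le_add {n k m : ℕ} (s : ℕ → ℤ) (hm : m < n) :
    s k ≤ s (k + m) ↔ n * s k + k ≤ n * s (k + m) + (k + m : ℕ) := by
  push_cast
  constructor
  · intro h
    nlinarith
  · intro h
    by_contra! hlt
    have : (n : ℤ) * (s (k + m) + 1) ≤ n * s k := by gcongr; exact hlt
    lia

theorem periodic_tilted_of_add_eq_sub_one {n : ℕ} {s : ℕ → ℤ} (hs : ∀ m, s (m + n) = s m - 1) :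
    Function.Periodic (fun m : ℕ => n * s m + m) n := by
  intro m
  simp only [hs, Nat.cast_add]
  ring

theorem forall_lt_le_add_iff_forall_le_of_periodic {α : Type*} [LE α] {n : ℕ} (hn : 0 < n)
    {φ : ℕ → α} (hφ : Function.Periodic φ n) (k : ℕ) :
    (∀ m < n, φ k ≤ φ (k + m)) ↔ ∀ m, φ k ≤ φ m := by
  refine ⟨fun h m => ?_, fun h m _ => h (k + m)⟩
  obtain ⟨j, hj⟩ : ∃ j, m + k * n = k + j :=
    Nat.exists_eq_add_of_le ((Nat.le_mul_of_pos_right k hn).trans (Nat.le_add_left _ m))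
  calc
    φ k ≤ φ (k + j % n) := h _ (Nat.mod_lt j hn)
    _ = φ (k + j) := (hφ.const_add k).map_mod_nat j
    _ = φ m := by rw [← hj]; exact hφ.nat_mul k m

theorem existsUnique_lt_forall_le_add {n : ℕ} (hn : 0 < n) {s : ℕ → ℤ}
    (hs : ∀ m, s (m + n) = s m - 1) :
    ∃! k, k < n ∧ ∀ m < n, s k ≤ s (k + m) := by
  set φ : ℕ → ℤ := fun m => n * s m + m with hφ
  have hper : Function.Periodic φ n := periodic_tilted_of_add_eq_sub_one hs
  have hmin_iff (k : ℕ) : (∀ m < n, s k ≤ s (k + m)) ↔ ∀ m, φ k ≤ φ m := by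
    rw [← forall_lt_le_add_iff_forall_le_of_periodic hn hper]
    exact forall₂_congr fun m hm => le_add_iff_tilted_le_add s hm
  simp only [hmin_iff]
  obtain ⟨k, hk, hmin⟩ := Finset.exists_min_image (Finset.range n) φ ⟨0, Finset.mem_range.2 hn⟩
  simp only [Finset.mem_range] at hk hmin
  have hkmin (m : ℕ) : φ k ≤ φ m := by
    rw [← hper.map_mod_nat m]
    exact hmin _ (Nat.mod_lt m hn)
  refine ⟨k, ⟨hk, hkmin⟩, fun l ⟨hl, hlmin⟩ => ?_⟩
  have heq : φ l = φ k := (hlmin k).antisymm (hkmin l)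
  have hmod : (l : ℤ) ≡ k [ZMOD n] :=
    Int.modEq_iff_dvd.2 ⟨s l - s k, by simp only [hφ] at heq; linear_combination -heq⟩
  exact (Int.natCast_modEq_iff.1 hmod).eq_of_lt_of_lt hl hk

end CycleLemma

section FirstPassage

/-- First passage of a walk below zero: the walk with increments `f` first becomes negative at time
`n`, where it equals `-1`. For increments at least `-1` this is the event that the walk first hits
`-1` at time `n`; the lower bound on the increments is kept separate from the definition. -/
def IsFirstPassage (n : ℕ) (f : ℕ → ℤ) : Prop :=
  ∑ i ∈ Finset.range n, f i = -1 ∧ ∀ m < n, 0 ≤ ∑ i ∈ Finset.range m, f i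

theorem isFirstPassage_congr {n : ℕ} {f g : ℕ → ℤ} (h : ∀ i < n, f i = g i) :
    IsFirstPassage n f ↔ IsFirstPassage n g := by
  have hsum {m : ℕ} (hm : m ≤ n) : ∑ i ∈ Finset.range m, f i = ∑ i ∈ Finset.range m, g i :=
    Finset.sum_congr rfl fun i hi => h i ((Finset.mem_range.1 hi).trans_le hm)
  unfold IsFirstPassage
  rw [hsum le_rfl]
  exact and_congr_right fun _ => forall₂_congr fun m hm => by rw [hsum hm.le]

theorem sum_range_nonneg_of_forall_ne_neg_one {n : ℕ} {f : ℕ → ℤ} (hf : ∀ i < n, -1 ≤ f i)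
    (h : ∀ m ≤ n, ∑ i ∈ Finset.range m, f i ≠ -1) :
    0 ≤ ∑ i ∈ Finset.range n, f i := by
  induction n with
  | zero => simp
  | succ n ih =>
    have hpos := ih (fun i hi => hf i (by lia)) fun m hm => h m (by lia)
    have hstep := hf n n.lt_succ_self
    have hne := h (n + 1) le_rfl
    rw [Finset.sum_range_succ] at hne ⊢
    lia

theorem sInf_hitting_eq_iff_isFirstPassage {n : ℕ} (hn : 0 < n) {f : ℕ → ℤ}
    (hf : ∀ i < n, -1 ≤ f i) :
    sInf {m : ℕ | 1 ≤ m ∧ ∑ i ∈ Finset.range m, f i = -1} = n ↔ IsFirstPassage n f := by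
  set H : Set ℕ := {m | 1 ≤ m ∧ ∑ i ∈ Finset.range m, f i = -1}
  constructor
  · intro h
    have hmem : n ∈ H := h ▸ Nat.sInf_mem (Nat.nonempty_of_pos_sInf (h.symm ▸ hn))
    refine ⟨hmem.2, fun m hm => ?_⟩
    refine sum_range_nonneg_of_forall_ne_neg_one (fun i hi => hf i (hi.trans hm))
      fun j hj hsum => ?_
    have hj0 : j ≠ 0 := by
      rintro rfl
      simp at hsum
    have hjH : j ∈ H := ⟨Nat.one_le_iff_ne_zero.2 hj0, hsum⟩
    exact Nat.notMem_of_lt_sInf (h.symm ▸ hj.trans_lt hm) hjH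
  · rintro ⟨hsum, hnonneg⟩
    have hleast : IsLeast H n := by
      refine ⟨⟨hn, hsum⟩, fun m hm => ?_⟩
      by_contra! hlt
      have := hnonneg m hlt
      rw [hm.2] at this
      lia
    exact hleast.csInf_eq

theorem sum_range_add_period {n : ℕ} {y : ℕ → ℤ} (hy : Function.Periodic y n) (m : ℕ) :
    ∑ i ∈ Finset.range (m + n), y i =
      ∑ i ∈ Finset.range m, y i + ∑ i ∈ Finset.range n, y i := by
  have hshift (i : ℕ) : y (n + i) = y i := by rw [add_comm, hy]
  rw [add_comm m, Finset.sum_range_add, add_comm]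
  simp only [hshift]

theorem isFirstPassage_shift_iff {n : ℕ} {y : ℕ → ℤ} (hy : Function.Periodic y n)
    (hsum : ∑ i ∈ Finset.range n, y i = -1) (k : ℕ) :
    IsFirstPassage n (fun i => y (k + i)) ↔
      ∀ m < n, ∑ i ∈ Finset.range k, y i ≤ ∑ i ∈ Finset.range (k + m), y i := by
  have htotal : ∑ i ∈ Finset.range n, y (k + i) = -1 := by
    have := sum_range_add_period hy k
    rwa [Finset.sum_range_add, hsum, add_right_inj] at this
  simp only [IsFirstPassage, htotal, true_and, Finset.sum_range_add, le_add_iff_nonneg_right]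

theorem existsUnique_isFirstPassage_shift {n : ℕ} (hn : 0 < n) {y : ℕ → ℤ}
    (hy : Function.Periodic y n) (hsum : ∑ i ∈ Finset.range n, y i = -1) :
    ∃! k, k < n ∧ IsFirstPassage n (fun i => y (k + i)) := by
  simp only [isFirstPassage_shift_iff hy hsum]
  refine existsUnique_lt_forall_le_add hn fun m => ?_
  rw [sum_range_add_period hy, hsum, sub_eq_add_neg]

end FirstPassage

section CyclicShift

variable {α : Type*} {n : ℕ}

/-- The cyclic shift `(x₀, x₁, …, xₙ₋₁) ↦ (x₁, …, xₙ₋₁, x₀)` of a finite sequence, which acts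
on the increments of the walk. -/
def cyclicShift (x : Fin n → α) : Fin n → α := x ∘ finRotate n

theorem measurable_cyclicShift [MeasurableSpace α] :
    Measurable (cyclicShift : (Fin n → α) → Fin n → α) :=
  measurable_pi_lambda _ fun _ => measurable_pi_apply _

theorem sum_cyclicShift [AddCommMonoid α] (x : Fin n → α) : ∑ i, cyclicShift x i = ∑ i, x i :=
  Equiv.sum_comp (finRotate n) x

variable [NeZero n]

/-- The infinite periodic sequence that repeats the finite sequence `x`. It turns cyclic shifts into
translations of the time `ℕ`. -/
def periodicExtension (x : Fin n → α) (i : ℕ) : α := x (Fin.ofNat n i)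

theorem periodicExtension_of_lt (x : Fin n → α) {i : ℕ} (hi : i < n) :
    periodicExtension x i = x ⟨i, hi⟩ :=
  congrArg x (Fin.ext (Nat.mod_eq_of_lt hi))

theorem periodic_periodicExtension (x : Fin n → α) : Function.Periodic (periodicExtension x) n :=
  fun i => congrArg x (Fin.ext (Nat.add_mod_right i n))

theorem sum_range_periodicExtension [AddCommMonoid α] (x : Fin n → α) :
    ∑ i ∈ Finset.range n, periodicExtension x i = ∑ i, x i := by
  rw [← Fin.sum_univ_eq_sum_range]
  exact Finset.sum_congr rfl fun i _ => periodicExtension_of_lt x i.isLt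

theorem periodicExtension_cyclicShift (x : Fin n → α) (i : ℕ) :
    periodicExtension (cyclicShift x) i = periodicExtension x (i + 1) := by
  simp only [periodicExtension, cyclicShift, Function.comp_apply, finRotate_apply]
  congr 1
  exact Fin.ext (by simp [Fin.val_add])

theorem periodicExtension_iterate_cyclicShift (k : ℕ) (x : Fin n → α) (i : ℕ) :
    periodicExtension (cyclicShift^[k] x) i = periodicExtension x (k + i) := by
  induction k generalizing i with
  | zero => simp
  | succ k ih =>
    rw [Function.iterate_succ_apply', periodicExtension_cyclicShift, ih]
    congr 1
    ring

theorem existsUnique_isFirstPassage_iterate_cyclicShift {x : Fin n → ℤ} (hx : ∑ i, x i = -1) :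
    ∃! k, k < n ∧ IsFirstPassage n (periodicExtension (cyclicShift^[k] x)) := by
  have hshift (k : ℕ) :
      periodicExtension (cyclicShift^[k] x) = fun i => periodicExtension x (k + i) :=
    funext (periodicExtension_iterate_cyclicShift k x)
  simp only [hshift]
  exact existsUnique_isFirstPassage_shift (NeZero.pos n) (periodic_periodicExtension x)
    ((sum_range_periodicExtension x).trans hx)

end CyclicShift

section Measure

theorem eq_biUnion_preimage_iterate {α : Type*} {f : α → α} {A B : Set α} {n : ℕ} (hAB : A ⊆ B)
    (hfB : f ⁻¹' B ⊆ B) (h : ∀ x ∈ B, ∃ k < n, f^[k] x ∈ A) :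
    B = ⋃ k ∈ Finset.range n, f^[k] ⁻¹' A := by
  have hiter (k : ℕ) : f^[k] ⁻¹' B ⊆ B := by
    induction k with
    | zero => rfl
    | succ k ih => exact fun x hx => hfB (ih hx)
  apply Set.Subset.antisymm
  · intro x hx
    simpa using h x hx
  · exact Set.iUnion₂_subset fun k _ => (Set.preimage_mono hAB).trans (hiter k)

theorem measure_eq_div_of_existsUnique_iterate_mem {α : Type*} [MeasurableSpace α] {μ : Measure α}
    {f : α → α} (hf : MeasurePreserving f μ μ) {A B : Set α} (hA : NullMeasurableSet A μ)
    (hAB : A ⊆ B) (hfB : f ⁻¹' B ⊆ B) {n : ℕ} (hn : n ≠ 0)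
    (h : ∀ x ∈ B, ∃! k, k < n ∧ f^[k] x ∈ A) :
    μ A = μ B / n := by
  have hB : B = ⋃ k ∈ Finset.range n, f^[k] ⁻¹' A :=
    eq_biUnion_preimage_iterate hAB hfB fun x hx => (h x hx).exists
  have hdisj : Set.PairwiseDisjoint (Finset.range n : Set ℕ) fun k => f^[k] ⁻¹' A := by
    intro k hk l hl hkl
    simp only [Finset.coe_range, Set.mem_Iio] at hk hl
    refine Set.disjoint_left.2 fun x hxk hxl => hkl ?_
    have hx : x ∈ B := hB ▸ Set.mem_biUnion (Finset.mem_range.2 hk) hxk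
    exact (h x hx).unique ⟨hk, hxk⟩ ⟨hl, hxl⟩
  have hsum : μ B = n * μ A := calc
    μ B = ∑ k ∈ Finset.range n, μ (f^[k] ⁻¹' A) := by
      conv_lhs => rw [hB]
      exact measure_biUnion_finset₀ (fun _ hk _ hl hkl => (hdisj hk hl hkl).aedisjoint)
        fun k _ => hA.preimage (hf.iterate k).quasiMeasurePreserving
    _ = ∑ _k ∈ Finset.range n, μ A :=
      Finset.sum_congr rfl fun k _ => (hf.iterate k).measure_preimage hA
    _ = n * μ A := by rw [Finset.sum_const, Finset.card_range, nsmul_eq_mul]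
  rwa [ENNReal.eq_div_iff (Nat.cast_ne_zero.2 hn) (ENNReal.natCast_ne_top n), eq_comm]

theorem measure_isFirstPassage_periodicExtension {n : ℕ} [NeZero n] {μ : Measure (Fin n → ℤ)}
    (hμ : MeasurePreserving cyclicShift μ μ) :
    μ {x | IsFirstPassage n (periodicExtension x)} = μ {x | ∑ i, x i = -1} / n := by
  refine measure_eq_div_of_existsUnique_iterate_mem hμ
    (Set.to_countable _).measurableSet.nullMeasurableSet ?_ ?_ (NeZero.ne n)
    fun x hx => existsUnique_isFirstPassage_iterate_cyclicShift hx
  · exact fun x hx => (sum_range_periodicExtension x).symm.trans hx.1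
  · exact fun x hx => (sum_cyclicShift x).symm.trans hx

end Measure

section Probability

variable {Ω : Type*} [MeasurableSpace Ω] {P : Measure Ω}

theorem measurePreserving_map_of_identDistrib_comp {α : Type*} [MeasurableSpace α] {X : Ω → α}
    {f : α → α} (hf : Measurable f) (h : IdentDistrib (f ∘ X) X P P) :
    MeasurePreserving f (P.map X) (P.map X) :=
  ⟨hf, by rw [AEMeasurable.map_map_of_aemeasurable hf.aemeasurable h.aemeasurable_snd, h.map_eq]⟩

theorem identDistrib_precomp_of_iIndepFun {ι κ E : Type*} [Countable κ] [MeasurableSpace E]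
    {X : ι → Ω → E} (hindep : iIndepFun X P) (hident : ∀ i j, IdentDistrib (X i) (X j) P P)
    {g h : κ → ι} (hg : Function.Injective g) (hh : Function.Injective h) :
    IdentDistrib (fun ω i => X (g i) ω) (fun ω i => X (h i) ω) P P :=
  IdentDistrib.pi (fun i => hident (g i) (h i)) (hindep.precomp hg) (hindep.precomp hh)

theorem identDistrib_cyclicShift_of_iIndepFun {E : Type*} [MeasurableSpace E] {ξ : ℕ → Ω → E}
    (hindep : iIndepFun ξ P) (hident : ∀ i j, IdentDistrib (ξ i) (ξ j) P P) (n : ℕ) :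
    IdentDistrib (fun ω => cyclicShift fun i : Fin n => ξ i ω) (fun ω (i : Fin n) => ξ i ω) P P :=
  identDistrib_precomp_of_iIndepFun hindep hident
    (Fin.val_injective.comp (finRotate n).injective) Fin.val_injective

end Probability

theorem stmt9_general {Ω : Type*} [MeasurableSpace Ω] {P : Measure Ω} {n : ℕ} (hn : 1 ≤ n)
    {ξ : ℕ → Ω → ℤ}
    (hcyclic : IdentDistrib (fun ω => cyclicShift fun i : Fin n => ξ i ω)
      (fun ω (i : Fin n) => ξ i ω) P P)
    (hval : ∀ᵐ ω ∂P, ∀ i < n, -1 ≤ ξ i ω) {T : Ω → ℕ}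
    (hT : ∀ᵐ ω ∂P, T ω = sInf {m : ℕ | 1 ≤ m ∧ ∑ i ∈ Finset.range m, ξ i ω = -1}) :
    P {ω | T ω = n} = P {ω | ∑ i ∈ Finset.range n, ξ i ω = -1} / n := by
  have : NeZero n := ⟨Nat.one_le_iff_ne_zero.1 hn⟩
  set X : Ω → Fin n → ℤ := fun ω i => ξ i ω
  have hmap (A : Set (Fin n → ℤ)) : P (X ⁻¹' A) = P.map X A :=
    (Measure.map_apply_of_aemeasurable hcyclic.aemeasurable_snd
      (Set.to_countable A).measurableSet).symm
  have hpassage : {ω | T ω = n} =ᵐ[P] X ⁻¹' {x | IsFirstPassage n (periodicExtension x)} := by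
    filter_upwards [hval, hT] with ω hω hTω
    refine propext ?_
    change T ω = n ↔ IsFirstPassage n (periodicExtension (X ω))
    rw [hTω, sInf_hitting_eq_iff_isFirstPassage hn hω]
    exact isFirstPassage_congr fun i hi => (periodicExtension_of_lt (X ω) hi).symm
  have hreturn : {ω | ∑ i ∈ Finset.range n, ξ i ω = -1} = X ⁻¹' {x | ∑ i, x i = -1} := by
    ext ω
    simp only [Set.mem_ofPred_eq, Set.mem_preimage, X, Fin.sum_univ_eq_sum_range (ξ · ω)]
  rw [measure_congr hpassage, hreturn, hmap, hmap]
  exact measure_isFirstPassage_periodicExtension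
    (measurePreserving_map_of_identDistrib_comp measurable_cyclicShift hcyclic)

/-- Otter–Dwass formula / cyclic lemma: if `(ξᵢ)` are i.i.d. random variables
with values in `{−1,0,1,2,…}`, `Sₘ = ξ₁ + ⋯ + ξₘ` and `T = inf{m ≥ 1 : Sₘ = −1}`, then for
every `n ≥ 1`, `ℙ(T = n) = (1/n)·ℙ(Sₙ = −1)`. -/
theorem stmt9 {Ω : Type*} [MeasurableSpace Ω] (P : Measure Ω) [IsProbabilityMeasure P]
    (ξ : ℕ → Ω → ℤ) (hmeas : ∀ i, Measurable (ξ i))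
    (hindep : iIndepFun ξ P)
    (hident : ∀ i, Measure.map (ξ i) P = Measure.map (ξ 0) P)
    (hval : ∀ i, ∀ ω, -1 ≤ ξ i ω)
    (T : Ω → ℕ)
    (hT : ∀ ω, T ω = sInf {m : ℕ | 1 ≤ m ∧ (∑ i ∈ Finset.range m, ξ i ω) = -1}) :
    ∀ n : ℕ, 1 ≤ n →
      P {ω | T ω = n} = P {ω | (∑ i ∈ Finset.range n, ξ i ω) = -1} / n :=
  fun n hn => stmt9_general hn
    (identDistrib_cyclicShift_of_iIndepFun hindep (fun i j => ⟨(hmeas i).aemeasurable,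
      (hmeas j).aemeasurable, (hident i).trans (hident j).symm⟩) n)
    (.of_forall fun ω i _ => hval i ω) (.of_forall hT)
end

section
/- Let (p(n,·)) satisfy Hypothesis (H') with parameters (γ,μ). Then for every ε ∈ (0,1) such that μ({1−ε}) = 0, n^γ·Σ_{k=0}^{⌊(1−ε)n⌋} p(n,k) → ∫_{[0,1−ε]} (1−x)^{−1} μ(dx) as n → ∞, and this limit c_ε = ∫_{[0,1−ε]}(1−x)^{−1}μ(dx) is finite. In other words, under (H'), starting from n the probability that the chain makes a one-step jump below (1−ε)n is asymptotically c_ε·n^{−γ}. -/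
/-!
Hypothesis (H') says that the measures `n^γ ∑ₖ p(n,k) (1 - k/n) δ_{k/n}` converge weakly to `μ`.
Integrating `(1 - x)⁻¹` over `(-∞, 1 - ε]` against them cancels the factor `1 - k/n` and leaves
exactly the rescaled jump probability. The integrand is bounded and continuous on this closed
half-line, whose frontier `{1 - ε}` is `μ`-null, so by the portmanteau theorem the integrals
converge.
-/

open MeasureTheory Filter Real Set

section Portmanteau

open scoped Topology NNReal ENNReal BoundedContinuousFunction

variable {Ω ι : Type*} [MeasurableSpace Ω] [TopologicalSpace Ω]
  {L : Filter ι} {ν : ι → FiniteMeasure Ω} {μ : FiniteMeasure Ω}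

/-- The measure with bounded continuous density `f` with respect to `μ`, as a `FiniteMeasure`.
It is used to turn convergence of measures of sets into convergence of integrals over sets. -/
noncomputable def withBoundedDensity (μ : FiniteMeasure Ω) (f : Ω →ᵇ ℝ≥0) : FiniteMeasure Ω :=
  ⟨(μ : Measure Ω).withDensity fun x => f x,
    isFiniteMeasure_withDensity (f.lintegral_lt_top_of_nnreal μ).ne⟩

theorem toMeasure_withBoundedDensity (μ : FiniteMeasure Ω) (f : Ω →ᵇ ℝ≥0) :
    (withBoundedDensity μ f : Measure Ω) = (μ : Measure Ω).withDensity fun x => f x :=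
  rfl

variable [OpensMeasurableSpace Ω]

theorem tendsto_withBoundedDensity (h : Tendsto ν L (𝓝 μ)) (f : Ω →ᵇ ℝ≥0) :
    Tendsto (fun i => withBoundedDensity (ν i) f) L (𝓝 (withBoundedDensity μ f)) := by
  have lintegral_eq (ρ : FiniteMeasure Ω) (g : Ω →ᵇ ℝ≥0) :
      ∫⁻ x, g x ∂(withBoundedDensity ρ f : Measure Ω) = ∫⁻ x, (f * g) x ∂(ρ : Measure Ω) := by
    rw [toMeasure_withBoundedDensity, lintegral_withDensity_eq_lintegral_mul _
      f.continuous.measurable.coe_nnreal_ennreal g.continuous.measurable.coe_nnreal_ennreal]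
    simp only [Pi.mul_apply, BoundedContinuousFunction.coe_mul, ENNReal.coe_mul]
  rw [FiniteMeasure.tendsto_iff_forall_lintegral_tendsto] at h ⊢
  intro g
  simpa only [lintegral_eq] using h (f * g)

variable [HasOuterApproxClosed Ω]

theorem measure_le_liminf_of_isOpen_of_tendsto (h : Tendsto ν L (𝓝 μ)) {G : Set Ω}
    (hG : IsOpen G) : (μ : Measure Ω) G ≤ L.liminf fun i => (ν i : Measure Ω) G := by
  refine (le_liminf_iff).2 fun c hc => ?_
  have mass_eq (ρ : FiniteMeasure Ω) :
      (ρ : Measure Ω) G + (ρ : Measure Ω) Gᶜ = ρ.mass := by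
    rw [measure_add_measure_compl hG.measurableSet, FiniteMeasure.ennreal_mass]
  have hc_add : c + (μ : Measure Ω) Gᶜ < μ.mass := by
    rw [← mass_eq]
    exact ENNReal.add_lt_add_right (measure_ne_top _ _) hc
  obtain ⟨d, hcd, hd⟩ := exists_between hc_add
  have compl_lt : L.limsup (fun i => (ν i : Measure Ω) Gᶜ) < d - c :=
    (FiniteMeasure.limsup_measure_closed_le_of_tendsto h hG.isClosed_compl).trans_lt
      (lt_tsub_iff_left.2 hcd)
  filter_upwards [eventually_lt_of_limsup_lt compl_lt,
    (ENNReal.tendsto_coe.2 h.mass).eventually_const_lt hd] with i hi hdi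
  by_contra! hle
  exact hdi.not_ge <| calc
    ((ν i).mass : ℝ≥0∞) = (ν i : Measure Ω) G + (ν i : Measure Ω) Gᶜ := (mass_eq _).symm
    _ ≤ c + (d - c) := add_le_add hle hi.le
    _ = d := add_tsub_cancel_of_le (le_self_add.trans hcd.le)

theorem tendsto_measure_of_measure_frontier_eq_zero (h : Tendsto ν L (𝓝 μ)) {E : Set Ω}
    (hE : (μ : Measure Ω) (frontier E) = 0) :
    Tendsto (fun i => (ν i : Measure Ω) E) L (𝓝 ((μ : Measure Ω) E)) :=
  tendsto_measure_of_le_liminf_measure_of_limsup_measure_le interior_subset subset_closure hE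
    (measure_le_liminf_of_isOpen_of_tendsto h isOpen_interior)
    (FiniteMeasure.limsup_measure_closed_le_of_tendsto h isClosed_closure)

theorem tendsto_restrict_of_measure_frontier_eq_zero (h : Tendsto ν L (𝓝 μ)) {E : Set Ω}
    (hE : (μ : Measure Ω) (frontier E) = 0) :
    Tendsto (fun i => (ν i).restrict E) L (𝓝 (μ.restrict E)) := by
  rw [FiniteMeasure.tendsto_iff_forall_lintegral_tendsto]
  intro f
  have hE_density : (withBoundedDensity μ f : Measure Ω) (frontier E) = 0 :=
    withDensity_absolutelyContinuous _ _ hE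
  simpa only [toMeasure_withBoundedDensity, withDensity_apply', FiniteMeasure.restrict_measure_eq]
    using tendsto_measure_of_measure_frontier_eq_zero (tendsto_withBoundedDensity h f) hE_density

theorem tendsto_setIntegral_of_continuousOn [NormalSpace Ω] (h : Tendsto ν L (𝓝 μ)) {E : Set Ω}
    (hE_closed : IsClosed E) (hE : (μ : Measure Ω) (frontier E) = 0) {f : Ω → ℝ}
    (hf : ContinuousOn f E) {C : ℝ} (hC : ∀ x ∈ E, ‖f x‖ ≤ C) :
    Tendsto (fun i => ∫ x in E, f x ∂(ν i : Measure Ω)) L (𝓝 (∫ x in E, f x ∂(μ : Measure Ω))) := by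
  obtain ⟨g, -, hg⟩ := BoundedContinuousFunction.exists_norm_eq_domRestrict_eq_of_closed
    (.ofNormedAddCommGroup (E.domRestrict f) hf.domRestrict C fun x => hC x x.2) hE_closed
  have g_eq (x : Ω) (hx : x ∈ E) : g x = f x := DFunLike.congr_fun hg ⟨x, hx⟩
  have setIntegral_eq (ρ : FiniteMeasure Ω) :
      ∫ x, g x ∂(ρ.restrict E : Measure Ω) = ∫ x in E, f x ∂(ρ : Measure Ω) :=
    setIntegral_congr_fun hE_closed.measurableSet g_eq
  simpa only [setIntegral_eq] using FiniteMeasure.tendsto_iff_forall_integral_tendsto.1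
    (tendsto_restrict_of_measure_frontier_eq_zero h hE) g

end Portmanteau

section JumpMeasure

open scoped Topology

variable {p : ℕ → ℕ → ℝ} {γ : ℝ}

/-- The measure `n^γ ∑ₖ p(n,k) (1 - k/n) δ_{k/n}`, through which Hypothesis (H') becomes a weak
convergence of finite measures. Negative weights are truncated to `0`. -/
noncomputable def jumpMeasure (p : ℕ → ℕ → ℝ) (γ : ℝ) (n : ℕ) : FiniteMeasure ℝ :=
  ∑ k ∈ Finset.range (n + 1), ((n : ℝ) ^ γ * (p n k * (1 - (k : ℝ) / n))).toNNReal •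
    (diracProba ((k : ℝ) / n)).toFiniteMeasure

theorem toMeasure_jumpMeasure (p : ℕ → ℕ → ℝ) (γ : ℝ) (n : ℕ) :
    (jumpMeasure p γ n : Measure ℝ) = ∑ k ∈ Finset.range (n + 1),
      ((n : ℝ) ^ γ * (p n k * (1 - (k : ℝ) / n))).toNNReal • Measure.dirac ((k : ℝ) / n) := by
  rw [jumpMeasure, FiniteMeasure.toMeasure_sum]
  rfl

theorem integral_jumpMeasure {n : ℕ} (hp : ∀ k ≤ n, 0 ≤ p n k) (f : ℝ → ℝ) :
    ∫ x, f x ∂(jumpMeasure p γ n : Measure ℝ) =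
      (n : ℝ) ^ γ * ∑ k ∈ Finset.range (n + 1), p n k * (1 - (k : ℝ) / n) * f ((k : ℝ) / n) := by
  have weight_nonneg (k : ℕ) (hk : k ∈ Finset.range (n + 1)) :
      0 ≤ (n : ℝ) ^ γ * (p n k * (1 - (k : ℝ) / n)) := by
    have hkn : k ≤ n := Finset.mem_range_succ_iff.1 hk
    have hdiv : (k : ℝ) / n ≤ 1 := div_le_one_of_le₀ (mod_cast hkn) n.cast_nonneg
    exact mul_nonneg (by positivity) (mul_nonneg (hp k hkn) (sub_nonneg.2 hdiv))
  have integrable_atom (k : ℕ) (_ : k ∈ Finset.range (n + 1)) :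
      Integrable f (((n : ℝ) ^ γ * (p n k * (1 - (k : ℝ) / n))).toNNReal •
        Measure.dirac ((k : ℝ) / n)) :=
    (integrable_dirac enorm_lt_top).smul_measure_nnreal
  rw [toMeasure_jumpMeasure, integral_finsetSum_measure integrable_atom, Finset.mul_sum]
  refine Finset.sum_congr rfl fun k hk => ?_
  rw [integral_smul_nnreal_measure, integral_dirac, NNReal.smul_def,
    Real.coe_toNNReal _ (weight_nonneg k hk), smul_eq_mul]
  ring

theorem HypHprime.tendsto_jumpMeasure {μ : FiniteMeasure ℝ} (hH : HypHprime p γ μ)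
    (hp : ∀ n, ∀ k ≤ n, 0 ≤ p n k) :
    Tendsto (jumpMeasure p γ) atTop (𝓝 (μ.restrict (Icc 0 1))) := by
  rw [FiniteMeasure.tendsto_iff_forall_integral_tendsto]
  intro f
  simpa only [integral_jumpMeasure (hp _), FiniteMeasure.restrict_measure_eq]
    using hH f f.continuous.continuousOn

theorem filter_range_div_le_eq_range_floor {a : ℝ} (ha0 : 0 ≤ a) (ha1 : a ≤ 1) {n : ℕ}
    (hn : n ≠ 0) :
    {k ∈ Finset.range (n + 1) | ((k : ℕ) : ℝ) / n ≤ a} = Finset.range (⌊a * n⌋₊ + 1) := by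
  have hn_pos : (0 : ℝ) < n := mod_cast hn.bot_lt
  have floor_le : ⌊a * n⌋₊ ≤ n := Nat.floor_le_of_le (mul_le_of_le_one_left hn_pos.le ha1)
  ext k
  have div_le_iff : (k : ℝ) / n ≤ a ↔ k ≤ ⌊a * n⌋₊ := by
    rw [Nat.le_floor_iff (by positivity), div_le_iff₀ hn_pos]
  rw [Finset.mem_filter, Finset.mem_range_succ_iff, Finset.mem_range_succ_iff, div_le_iff]
  exact and_iff_right_of_imp fun hk => hk.trans floor_le

theorem setIntegral_Iic_inv_one_sub_jumpMeasure {n : ℕ} (hn : n ≠ 0) (hp : ∀ k ≤ n, 0 ≤ p n k)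
    {a : ℝ} (ha0 : 0 ≤ a) (ha1 : a < 1) :
    ∫ x in Iic a, (1 - x)⁻¹ ∂(jumpMeasure p γ n : Measure ℝ) =
      (n : ℝ) ^ γ * ∑ k ∈ Finset.range (⌊a * n⌋₊ + 1), p n k := by
  rw [← integral_indicator measurableSet_Iic, integral_jumpMeasure hp,
    ← filter_range_div_le_eq_range_floor ha0 ha1.le hn, Finset.sum_filter]
  congr 1
  refine Finset.sum_congr rfl fun k _ => ?_
  split_ifs with hk
  · have hne : 1 - (k : ℝ) / n ≠ 0 := (sub_pos.2 (hk.trans_lt ha1)).ne'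
    rw [indicator_of_mem (mem_Iic.2 hk), mul_inv_cancel_right₀ hne]
  · rw [indicator_of_notMem (notMem_Iic.2 (not_le.1 hk)), mul_zero]

end JumpMeasure

theorem continuousOn_inv_one_sub_Iic {a : ℝ} (ha : a < 1) :
    ContinuousOn (fun x : ℝ => (1 - x)⁻¹) (Iic a) :=
  ContinuousOn.inv₀ (by fun_prop) fun _ hx => (sub_pos.2 (hx.trans_lt ha)).ne'

theorem norm_inv_one_sub_le {a x : ℝ} (ha : a < 1) (hx : x ≤ a) : ‖(1 - x)⁻¹‖ ≤ (1 - a)⁻¹ := by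
  rw [norm_inv, Real.norm_of_nonneg (sub_nonneg.2 (hx.trans ha.le))]
  exact inv_anti₀ (sub_pos.2 ha) (sub_le_sub_left hx 1)

theorem stmt16_general (p : ℕ → ℕ → ℝ) (γ : ℝ) (μ : Measure ℝ) [IsFiniteMeasure μ]
    (hp : ∀ n k : ℕ, k ≤ n → 0 ≤ p n k) (hH : HypHprime p γ μ)
    (ε : ℝ) (hε0 : 0 < ε) (hε1 : ε ≤ 1) (hatom : μ {1 - ε} = 0) :
    IntegrableOn (fun x => (1 - x)⁻¹) (Icc 0 (1 - ε)) μ ∧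
    Tendsto (fun n : ℕ => (n : ℝ) ^ γ * ∑ k ∈ Finset.range (⌊(1 - ε) * (n : ℝ)⌋₊ + 1), p n k)
      atTop (nhds (∫ x in Icc (0 : ℝ) (1 - ε), (1 - x)⁻¹ ∂μ)) := by
  obtain ⟨μ, rfl⟩ : ∃ ν : FiniteMeasure ℝ, (ν : Measure ℝ) = μ :=
    ⟨⟨μ, inferInstance⟩, rfl⟩
  have ha0 : 0 ≤ 1 - ε := sub_nonneg.2 hε1
  have ha1 : 1 - ε < 1 := sub_lt_self 1 hε0
  have hcont := continuousOn_inv_one_sub_Iic ha1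
  refine ⟨(hcont.mono Icc_subset_Iic_self).integrableOn_compact isCompact_Icc, ?_⟩
  have frontier_null : (μ.restrict (Icc 0 1) : Measure ℝ) (frontier (Iic (1 - ε))) = 0 := by
    rw [frontier_Iic]
    exact Measure.absolutelyContinuous_restrict hatom
  have hlim := tendsto_setIntegral_of_continuousOn (hH.tendsto_jumpMeasure hp) isClosed_Iic
    frontier_null hcont fun _ => norm_inv_one_sub_le ha1
  have inter_eq : Iic (1 - ε) ∩ Icc 0 1 = Icc 0 (1 - ε) := by
    rw [← Ici_inter_Iic, inter_left_comm, Iic_inter_Iic, min_eq_left ha1.le,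
      Ici_inter_Iic]
  rw [FiniteMeasure.restrict_measure_eq, Measure.restrict_restrict measurableSet_Iic,
    inter_eq] at hlim
  refine hlim.congr' ?_
  filter_upwards [eventually_ne_atTop 0] with n hn
  exact setIntegral_Iic_inv_one_sub_jumpMeasure hn (hp n) ha0 ha1

/-- under Hypothesis (H') with parameters `(γ,μ)`, for every `ε ∈ (0,1)` with
`μ({1−ε}) = 0`, the function `x ↦ (1−x)⁻¹` is `μ`-integrable on `[0,1−ε]` and
`n^γ · Σ_{k=0}^{⌊(1−ε)n⌋} p(n,k) → ∫_{[0,1−ε]} (1−x)⁻¹ μ(dx) = c_ε < ∞`: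
the probability of a one-step jump from `n` below `(1−ε)n` is asymptotically `c_ε·n^{−γ}`. -/
theorem stmt16 (p : ℕ → ℕ → ℝ) (γ : ℝ) (hγ : 0 < γ)
    (μ : Measure ℝ) [IsFiniteMeasure μ] (hμ0 : μ ≠ 0) (hsupp : μ (Set.Icc (0:ℝ) 1)ᶜ = 0)
    (hp0 : ∀ n k : ℕ, k ≤ n → 0 ≤ p n k)
    (hp1 : ∀ n : ℕ, 1 ≤ n → ∑ k ∈ Finset.range (n + 1), p n k = 1)
    (hH : HypHprime p γ μ)
    (ε : ℝ) (hε0 : 0 < ε) (hε1 : ε < 1) (hatom : μ {1 - ε} = 0) :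
    IntegrableOn (fun x => (1 - x)⁻¹) (Set.Icc 0 (1 - ε)) μ ∧
    Tendsto (fun n : ℕ => (n : ℝ) ^ γ * ∑ k ∈ Finset.range (⌊(1 - ε) * (n : ℝ)⌋₊ + 1), p n k)
      atTop (nhds (∫ x in Set.Icc (0:ℝ) (1 - ε), (1 - x)⁻¹ ∂μ)) :=
  stmt16_general p γ μ hp0 hH ε hε0 hε1.le hatom
end
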